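/- arXiv:1009.6139 — 3 statements merged into one kernel-verified Lean document; each statement's English description precedes it below -/
import Mathlib

section
/- Let α ∈ F(13) be the unique power series with |α| > 1 satisfying −α⁴/12 − Tα³ + α² + 1 = 0 (the inverse of the unique root in F(13) of x⁴ + x² − Tx − 1/12 = 0). Then the first six partial quotients of the continued fraction expansion of α are (a₁, …, a₆) = (T, 12T, 7T, 11T, 8T, 5T), and the seventh complete quotient α₇ satisfies α¹³ = (T² + 8)⁴ α₇ + 4(2T⁷ + 10T⁵ + 12T³ + 5T). -/
/-!
Since `-1/12 = 1` in `F₁₃`, the equation reads `α⁴ = Tα³ - α² - 1`, that is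
`α = T - α⁻¹ - α⁻³`, so `|α| = |T|`.

Put `N = α¹³ - 4(2T⁷ + 10T⁵ + 12T³ + 5T)` and `P = (T² + 8)⁴`. By size, `γ = N / P` has
degree `13 - 8 > 0`. Running the continued fraction recurrence backwards from the tail `γ`
through `5T, 8T, 11T, 7T, 12T, T` yields Laurent series of positive degree, and the last one
equals `α`: after clearing denominators this is one polynomial identity in `α` and `T`, a
consequence of the quartic equation in characteristic 13 (`key_identity`, with an explicit
cofactor). The continued fraction expansion is unique (`cf_step_unique`), so the given
partial quotients are the listed ones and the seventh complete quotient is `γ`.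
-/
noncomputable section
open Polynomial

def Tval (F : Type) [Field F] : LaurentSeries F :=
  (HahnSeries.single (1 : ℤ) (1 : F) : LaurentSeries F)⁻¹

def adeg {F : Type} [Field F] (α : LaurentSeries F) : ℤ := -α.order

def pEval {F : Type} [Field F] (f : Polynomial F) : LaurentSeries F :=
  f.eval₂ HahnSeries.C (Tval F)

def pEvalHom (F : Type) [Field F] : Polynomial F →+* LaurentSeries F :=
  Polynomial.eval₂RingHom HahnSeries.C (Tval F)

/-- substitution `T ↦ v T` on Laurent series in `1/T`
(the underlying Hahn-series variable is `1/T`). -/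
def scaleT {F : Type} [Field F] (v : F) (α : LaurentSeries F) : LaurentSeries F where
  coeff n := v ^ (-n) * α.coeff n
  isPWO_support' := α.isPWO_support'.mono (fun n hn => by
    simp only [Function.mem_support, ne_eq] at hn ⊢
    intro h; exact hn (by rw [h, mul_zero]))

/-- coefficient-wise map of Laurent series along a ring homomorphism. -/
def lsMap {F L : Type} [Field F] [Field L] (f : F →+* L) (α : LaurentSeries F) :
    LaurentSeries L where
  coeff n := f (α.coeff n)
  isPWO_support' := α.isPWO_support'.mono (fun n hn => by
    simp only [Function.mem_support, ne_eq] at hn ⊢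
    intro h; exact hn (by rw [h, map_zero]))

/-- integral (polynomial) part of a Laurent series in `1/T`. -/
def intPart {F : Type} [Field F] (α : LaurentSeries F) : Polynomial F :=
  ∑ j ∈ Finset.range ((-α.order).toNat + 1),
    Polynomial.C (α.coeff (-(j : ℤ))) * Polynomial.X ^ j

def IsCFOf {F : Type} [Field F] (α : LaurentSeries F) (a : ℕ → Polynomial F)
    (β : ℕ → LaurentSeries F) : Prop :=
  β 1 = α ∧ ∀ n, 1 ≤ n →
    0 < (a n).degree ∧ 0 < adeg (β n) ∧ β n = pEval (a n) + (β (n + 1))⁻¹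

def fcf {F : Type} [DivisionRing F] : List F → F
  | [] => 0
  | [c] => c
  | c :: d :: t => c + (fcf (d :: t))⁻¹

def fcfWD {F : Type} [DivisionRing F] : List F → Prop
  | [] => True
  | [_] => True
  | _ :: d :: t => fcf (d :: t) ≠ 0 ∧ fcfWD (d :: t)

def polyInt {F : Type} [Field F] (f : Polynomial F) : Polynomial F :=
  ∑ i ∈ Finset.range (f.natDegree + 1),
    Polynomial.C (f.coeff i * ((i : F) + 1)⁻¹) * Polynomial.X ^ (i + 1)

def Pka {F : Type} [Field F] (k : ℕ) (a : F) : Polynomial F :=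
  (Polynomial.X ^ 2 + Polynomial.C a) ^ k

def Qka {F : Type} [Field F] (k : ℕ) (a : F) : Polynomial F := polyInt (Pka (k - 1) a)

def Pk {F : Type} [Field F] (k : ℕ) : Polynomial F := (Polynomial.X ^ 2 - 1) ^ k

def Qk {F : Type} [Field F] (k : ℕ) : Polynomial F := polyInt (Pk (k - 1))

def Aseq (F : Type) [Field F] (p k : ℕ) : ℕ → Polynomial F
  | 0 => Polynomial.X
  | i + 1 => Aseq F p k i ^ p / Pk k

def vseq (F : Type) [Field F] (k : ℕ) : ℕ → F
  | 0 => 1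
  | 1 => 2 * k - 1
  | i + 1 =>
      (((2 * (k : ℤ) - 2 * i - 1) * (2 * (k : ℤ) - 2 * i + 1) : ℤ) : F) *
        (((i : F) * (2 * k - i))⁻¹) * (vseq F k i)⁻¹

def theta (F : Type) [Field F] (k : ℕ) : F :=
  (-1) ^ k * ∏ j ∈ Finset.Icc 1 k, (1 - (2 * (j : F))⁻¹)

def continuant {R : Type} [CommRing R] (a : ℕ → R) (c0 c1 : R) : ℕ → R
  | 0 => c0
  | 1 => c1
  | n + 2 => a (n + 2) * continuant a c0 c1 (n + 1) + continuant a c0 c1 n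

def largestPow (m N : ℕ) : ℕ := sSup {j : ℕ | m ^ j ∣ N}

def nu0 {F : Type} [Field F] (a : ℕ → Polynomial F) : ℝ :=
  Filter.limsup
    (fun n => ((a (n + 1)).natDegree : ℝ) / ∑ j ∈ Finset.Icc 1 n, ((a j).natDegree : ℝ))
    Filter.atTop
instance : Fact (Nat.Prime 13) := ⟨by norm_num⟩

/-- The `1/T`-adic additive valuation; it is `-adeg` away from zero and `⊤` at zero. -/
abbrev val : AddValuation (LaurentSeries (ZMod 13)) (WithTop ℤ) :=
  HahnSeries.addVal ℤ (ZMod 13)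

lemma val_Tval : val (Tval (ZMod 13)) = ((-1 : ℤ) : WithTop ℤ) := by
  rw [HahnSeries.addVal_apply, Tval, HahnSeries.inv_single, inv_one,
    HahnSeries.orderTop_single one_ne_zero]

lemma thirteen_eq_zero : (13 : LaurentSeries (ZMod 13)) = 0 := by
  have h : (13 : ZMod 13) = 0 := by decide
  have := congrArg (HahnSeries.C (Γ := ℤ)) h
  rwa [map_ofNat, map_zero] at this

lemma val_C_nonneg (c : ZMod 13) :
    (0 : WithTop ℤ) ≤ val (HahnSeries.C c) := by
  rw [HahnSeries.addVal_apply]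
  exact HahnSeries.orderTop_single_le (a := (0 : ℤ))

lemma val_C_of_ne {c : ZMod 13} (hc : c ≠ 0) : val (HahnSeries.C c) = 0 := by
  rw [HahnSeries.addVal_apply, HahnSeries.C_apply, HahnSeries.orderTop_single hc]
  rfl

lemma val_inv_pos {x : LaurentSeries (ZMod 13)} (hx : val x < 0) : 0 < val x⁻¹ := by
  have hx0 : x ≠ 0 := by
    rintro rfl
    simp at hx
  have h : val x + val x⁻¹ = 0 := by
    rw [← AddValuation.map_mul, mul_inv_cancel₀ hx0, AddValuation.map_one]
  by_contra hn
  have hle : val x + val x⁻¹ ≤ val x := add_le_of_nonpos_right (not_lt.mp hn)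
  rw [h] at hle
  exact absurd hx (not_lt.mpr hle)

lemma val_neg_of_adeg_pos {x : LaurentSeries (ZMod 13)} (hx : 0 < adeg x) : val x < 0 := by
  have hx0 : x ≠ 0 := by
    rintro rfl
    simp [adeg] at hx
  rw [HahnSeries.addVal_apply_of_ne hx0]
  unfold adeg at hx
  exact_mod_cast (by omega : x.order < 0)

lemma pEval_coeff (f : Polynomial (ZMod 13)) (n : ℕ) :
    (pEval f).coeff (-(n : ℤ)) = f.coeff n := by
  have hT : ∀ k : ℕ, Tval (ZMod 13) ^ k = HahnSeries.single (-(k : ℤ)) 1 := by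
    intro k
    rw [Tval, HahnSeries.inv_single, HahnSeries.single_pow]
    simp
  induction f using Polynomial.induction_on' with
  | add p q hp hq =>
    rw [pEval, Polynomial.eval₂_add, HahnSeries.coeff_add, Polynomial.coeff_add, ← hp, ← hq]
    rfl
  | monomial k c =>
    rw [pEval, Polynomial.eval₂_monomial, hT, HahnSeries.C_mul_eq_smul, HahnSeries.coeff_smul,
      HahnSeries.coeff_single, Polynomial.coeff_monomial]
    by_cases h : k = n
    · simp [h]
    · have h' : ¬ n = k := fun e => h e.symm
      simp [h, h']

/-- A nonzero polynomial in `T` has nonnegative degree. -/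
lemma eq_zero_of_val_pEval_pos {f : Polynomial (ZMod 13)} (h : 0 < val (pEval f)) : f = 0 := by
  ext n
  rw [← pEval_coeff, Polynomial.coeff_zero]
  apply HahnSeries.coeff_eq_zero_of_lt_orderTop
  refine lt_of_le_of_lt ?_ h
  exact_mod_cast (by omega : -(n : ℤ) ≤ 0)

/-- Uniqueness of the decomposition of a Laurent series into a polynomial and the inverse of
a series of positive degree. -/
lemma cf_step_unique {f g : Polynomial (ZMod 13)} {x y : LaurentSeries (ZMod 13)}
    (hx : val x < 0) (hy : val y < 0) (h : pEval f + x⁻¹ = pEval g + y⁻¹) :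
    f = g ∧ x = y := by
  have hsub : pEval (f - g) = y⁻¹ - x⁻¹ := by
    have : pEval (f - g) = pEval f - pEval g := Polynomial.eval₂_sub _
    rw [this]
    linear_combination h
  have hfg : f = g := by
    apply sub_eq_zero.mp
    apply eq_zero_of_val_pEval_pos
    rw [hsub, sub_eq_add_neg]
    apply AddValuation.map_lt_add
    · exact val_inv_pos hy
    · rw [AddValuation.map_neg]
      exact val_inv_pos hx
  subst hfg
  exact ⟨rfl, inv_injective (add_left_cancel h)⟩

lemma pEval_C_mul_X (c : ZMod 13) :
    pEval (Polynomial.C c * Polynomial.X) = HahnSeries.C c * Tval (ZMod 13) := by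
  simp [pEval]

/-- Prepending a partial quotient `cT`, `c ≠ 0`, to a series of positive degree. -/
lemma val_linear_add_inv {c : ZMod 13} (hc : c ≠ 0) {x : LaurentSeries (ZMod 13)}
    (hx : val x < 0) : val (HahnSeries.C c * Tval (ZMod 13) + x⁻¹) < 0 := by
  have h : val (HahnSeries.C c * Tval (ZMod 13)) = ((-1 : ℤ) : WithTop ℤ) := by
    rw [AddValuation.map_mul, val_Tval, val_C_of_ne hc, zero_add]
  have hneg : ((-1 : ℤ) : WithTop ℤ) < 0 := by exact_mod_cast (by omega : (-1 : ℤ) < 0)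
  rw [AddValuation.map_add_eq_of_lt_left, h]
  · exact hneg
  · rw [h]
    exact hneg.trans (val_inv_pos hx)

/-- With `x₇ = N`, `x₆ = 5T x₇ + P` and `xᵢ = aᵢ xᵢ₊₁ + xᵢ₊₂`, this is `α x₂ = x₁`. -/
lemma key_identity {K : Type*} [CommRing K] (h13 : (13 : K) = 0) (T α N P x6 x5 x4 x3 x2 : K)
    (hα : α ^ 4 - T * α ^ 3 + α ^ 2 + 1 = 0)
    (hN : N = α ^ 13 - 4 * (2 * T ^ 7 + 10 * T ^ 5 + 12 * T ^ 3 + 5 * T))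
    (hP : P = (T ^ 2 + 8) ^ 4)
    (h6 : x6 = 5 * T * N + P) (h5 : x5 = 8 * T * x6 + N) (h4 : x4 = 11 * T * x5 + x6)
    (h3 : x3 = 7 * T * x4 + x5) (h2 : x2 = 12 * T * x3 + x4) :
    α * x2 = T * x2 + x3 := by
  subst h2 h3 h4 h5 h6 hN hP
  -- The first coefficient is the quotient modulo 13 by the quartic; the second absorbs the
  -- multiples of 13 left over in the integral identity.
  linear_combination
    ((T ^ 5 + 2 * T ^ 3 + 2 * T) * α ^ 10 + (T ^ 4 + 4 * T ^ 2 - 1) * α ^ 9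
      + (2 * T ^ 3 - 3 * T) * α ^ 8 + (T ^ 4 + 6 * T ^ 2 + 1) * α ^ 7
      + (2 * T ^ 3 + 2 * T) * α ^ 6 + 5 * T ^ 2 * α ^ 5 + (T ^ 3 + T) * α ^ 4
      + (3 * T ^ 2 - 1) * α ^ 3 - 4 * T * α ^ 2 + (T ^ 2 + 1) * α + 4 * T) * hα
    + ((2843 * T ^ 5 + 174 * T ^ 3 + 2 * T) * α ^ 14
      - (2843 * T ^ 6 + 411 * T ^ 4 + 14 * T ^ 2) * α ^ 13
      - T ^ 2 * α ^ 11 - T ^ 2 * α ^ 9 - T ^ 2 * α ^ 7 - T ^ 2 * α ^ 5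
      + (-22176 * T ^ 12 - 96900 * T ^ 10 + 75557 * T ^ 8 + 1107136 * T ^ 6
        + 2367712 * T ^ 4 + 84555 * T ^ 2 + 315) * α
      + (22176 * T ^ 13 + 98748 * T ^ 11 - 67504 * T ^ 9 - 1113528 * T ^ 7
        - 2459896 * T ^ 5 - 280768 * T ^ 3 - 5040 * T)) * h13

lemma val_alpha {α : LaurentSeries (ZMod 13)} (hα : val α < 0)
    (hq : α ^ 4 - Tval (ZMod 13) * α ^ 3 + α ^ 2 + 1 = 0) :
    val α = ((-1 : ℤ) : WithTop ℤ) := by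
  have hα0 : α ≠ 0 := by
    rintro rfl
    simp at hα
  have hinv := val_inv_pos hα
  have heq : α = Tval (ZMod 13) + (-α⁻¹ + -(α⁻¹ * (α⁻¹ * α⁻¹))) := by
    field_simp
    linear_combination hq
  have hsmall : 0 < val (-α⁻¹ + -(α⁻¹ * (α⁻¹ * α⁻¹))) := by
    apply AddValuation.map_lt_add
    · rwa [AddValuation.map_neg]
    · rw [AddValuation.map_neg, AddValuation.map_mul, AddValuation.map_mul]
      exact hinv.trans_le (le_add_of_nonneg_right (add_nonneg hinv.le hinv.le))
  have hneg : ((-1 : ℤ) : WithTop ℤ) < 0 := by exact_mod_cast (by omega : (-1 : ℤ) < 0)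
  rw [heq, AddValuation.map_add_eq_of_lt_left, val_Tval]
  rw [val_Tval]
  exact hneg.trans hsmall

lemma val_ofNat_nonneg (n : ℕ) [n.AtLeastTwo] :
    (0 : WithTop ℤ) ≤ val (OfNat.ofNat n : LaurentSeries (ZMod 13)) := by
  have := val_C_nonneg (OfNat.ofNat n)
  rwa [map_ofNat] at this

lemma val_mul_T_pow {c : LaurentSeries (ZMod 13)} (hc : 0 ≤ val c) {k : ℕ} (hk : k ≤ 7) :
    ((-7 : ℤ) : WithTop ℤ) ≤ val (c * Tval (ZMod 13) ^ k) := by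
  rw [AddValuation.map_mul, AddValuation.map_pow, val_Tval, ← WithTop.coe_nsmul]
  calc ((-7 : ℤ) : WithTop ℤ) ≤ ((k • (-1 : ℤ) : ℤ) : WithTop ℤ) := by
        rw [WithTop.coe_le_coe]
        simp
        omega
    _ = 0 + ((k • (-1 : ℤ) : ℤ) : WithTop ℤ) := (zero_add _).symm
    _ ≤ _ := by gcongr

/-- For the unique `α ∈ F(13)` with `|α| > 1` and
`−α⁴/12 − Tα³ + α² + 1 = 0`, the first six partial quotients are
`(T, 12T, 7T, 11T, 8T, 5T)` and `α¹³ = (T² + 8)⁴ α₇ + 4(2T⁷ + 10T⁵ + 12T³ + 5T)`. -/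
theorem stmt6 (α : LaurentSeries (ZMod 13)) (hdeg : 0 < adeg α)
    (hα : -α ^ 4 / 12 - Tval (ZMod 13) * α ^ 3 + α ^ 2 + 1 = 0)
    (a : ℕ → Polynomial (ZMod 13)) (β : ℕ → LaurentSeries (ZMod 13))
    (hcf : IsCFOf α a β) :
    a 1 = Polynomial.X ∧
    a 2 = Polynomial.C 12 * Polynomial.X ∧
    a 3 = Polynomial.C 7 * Polynomial.X ∧
    a 4 = Polynomial.C 11 * Polynomial.X ∧
    a 5 = Polynomial.C 8 * Polynomial.X ∧
    a 6 = Polynomial.C 5 * Polynomial.X ∧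
    α ^ 13 = (Tval (ZMod 13) ^ 2 + 8) ^ 4 * β 7
           + 4 * (2 * Tval (ZMod 13) ^ 7 + 10 * Tval (ZMod 13) ^ 5
                  + 12 * Tval (ZMod 13) ^ 3 + 5 * Tval (ZMod 13)) := by
  obtain ⟨hβ1, hstep⟩ := hcf
  have h13 := thirteen_eq_zero
  have h12 : (12 : LaurentSeries (ZMod 13)) = -1 := by linear_combination h13
  have hq : α ^ 4 - Tval (ZMod 13) * α ^ 3 + α ^ 2 + 1 = 0 := by
    rw [h12, div_neg, div_one, neg_neg] at hα
    exact hα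
  have hvα := val_alpha (val_neg_of_adeg_pos hdeg) hq
  obtain ⟨N, hN⟩ : ∃ N, N = α ^ 13 - 4 * (2 * Tval (ZMod 13) ^ 7 + 10 * Tval (ZMod 13) ^ 5
    + 12 * Tval (ZMod 13) ^ 3 + 5 * Tval (ZMod 13)) := ⟨_, rfl⟩
  obtain ⟨P, hP⟩ : ∃ P, P = (Tval (ZMod 13) ^ 2 + 8) ^ 4 := ⟨_, rfl⟩
  have hvN : val N = ((-13 : ℤ) : WithTop ℤ) := by
    have h1 : val (α ^ 13) = ((-13 : ℤ) : WithTop ℤ) := by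
      rw [AddValuation.map_pow, hvα, ← WithTop.coe_nsmul]
      norm_num
    have h2 : ((-7 : ℤ) : WithTop ℤ) ≤ val (4 * (2 * Tval (ZMod 13) ^ 7
        + 10 * Tval (ZMod 13) ^ 5 + 12 * Tval (ZMod 13) ^ 3 + 5 * Tval (ZMod 13))) := by
      rw [AddValuation.map_mul, ← zero_add ((-7 : ℤ) : WithTop ℤ)]
      refine add_le_add (val_ofNat_nonneg 4) ?_
      refine AddValuation.map_le_add _ (AddValuation.map_le_add _
        (AddValuation.map_le_add _ ?_ ?_) ?_) ?_
      · exact val_mul_T_pow (val_ofNat_nonneg 2) le_rfl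
      · exact val_mul_T_pow (val_ofNat_nonneg 10) (by norm_num)
      · exact val_mul_T_pow (val_ofNat_nonneg 12) (by norm_num)
      · simpa using val_mul_T_pow (val_ofNat_nonneg 5) (k := 1) (by norm_num)
    rw [hN, AddValuation.map_sub_eq_of_lt_left, h1]
    rw [h1]
    exact lt_of_lt_of_le (WithTop.coe_lt_coe.mpr (by norm_num)) h2
  have hvP : val P = ((-8 : ℤ) : WithTop ℤ) := by
    have h1 : val (Tval (ZMod 13) ^ 2) = ((-2 : ℤ) : WithTop ℤ) := by
      rw [AddValuation.map_pow, val_Tval, ← WithTop.coe_nsmul]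
      norm_num
    rw [hP, AddValuation.map_pow, AddValuation.map_add_eq_of_lt_left, h1, ← WithTop.coe_nsmul]
    · norm_num
    · rw [h1]
      refine lt_of_lt_of_le ?_ (val_ofNat_nonneg 8)
      exact WithTop.coe_lt_coe.mpr (by norm_num)
  have hP0 : P ≠ 0 := by
    rintro h
    rw [h, AddValuation.map_zero] at hvP
    exact WithTop.top_ne_coe hvP
  -- The backward chain `γᵢ = aᵢ + 1 / γᵢ₊₁`, starting from `γ₇ = N / P`.
  obtain ⟨γ7, hγ7⟩ : ∃ γ, γ = N / P := ⟨_, rfl⟩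
  have hNγ : N = P * γ7 := by
    rw [hγ7]
    field_simp
  have hv7 : val γ7 < 0 := by
    by_contra hn
    have h1 : val P + 0 ≤ val P + val γ7 := by
      have := not_lt.mp hn
      gcongr
    rw [← AddValuation.map_mul, ← hNγ, hvN, hvP, add_zero, WithTop.coe_le_coe] at h1
    norm_num at h1
  have hne : ∀ {x : LaurentSeries (ZMod 13)}, val x < 0 → x ≠ 0 := by
    rintro x hx rfl
    simp at hx
  obtain ⟨γ6, hγ6⟩ : ∃ γ, γ = HahnSeries.C 5 * Tval (ZMod 13) + γ7⁻¹ := ⟨_, rfl⟩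
  have hv6 : val γ6 < 0 := hγ6 ▸ val_linear_add_inv (by decide) hv7
  obtain ⟨γ5, hγ5⟩ : ∃ γ, γ = HahnSeries.C 8 * Tval (ZMod 13) + γ6⁻¹ := ⟨_, rfl⟩
  have hv5 : val γ5 < 0 := hγ5 ▸ val_linear_add_inv (by decide) hv6
  obtain ⟨γ4, hγ4⟩ : ∃ γ, γ = HahnSeries.C 11 * Tval (ZMod 13) + γ5⁻¹ := ⟨_, rfl⟩
  have hv4 : val γ4 < 0 := hγ4 ▸ val_linear_add_inv (by decide) hv5
  obtain ⟨γ3, hγ3⟩ : ∃ γ, γ = HahnSeries.C 7 * Tval (ZMod 13) + γ4⁻¹ := ⟨_, rfl⟩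
  have hv3 : val γ3 < 0 := hγ3 ▸ val_linear_add_inv (by decide) hv4
  obtain ⟨γ2, hγ2⟩ : ∃ γ, γ = HahnSeries.C 12 * Tval (ZMod 13) + γ3⁻¹ := ⟨_, rfl⟩
  have hv2 : val γ2 < 0 := hγ2 ▸ val_linear_add_inv (by decide) hv3
  -- Clearing denominators: the products `P γ₇ γ₆ ⋯ γᵢ` follow the recurrence of `key_identity`.
  have clear : ∀ {c x y : LaurentSeries (ZMod 13)}, val y < 0 → x = c * Tval (ZMod 13) + y⁻¹ →
      y * x = c * Tval (ZMod 13) * y + 1 := by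
    rintro c x y hy rfl
    rw [mul_add, mul_inv_cancel₀ (hne hy)]
    ring
  simp only [map_ofNat] at hγ2 hγ3 hγ4 hγ5 hγ6
  have e6 := clear hv7 hγ6
  have e5 := clear hv6 hγ5
  have e4 := clear hv5 hγ4
  have e3 := clear hv4 hγ3
  have e2 := clear hv3 hγ2
  have key := key_identity h13 (Tval (ZMod 13)) α N P (N * γ6) (N * γ6 * γ5)
    (N * γ6 * γ5 * γ4) (N * γ6 * γ5 * γ4 * γ3) (N * γ6 * γ5 * γ4 * γ3 * γ2) hq hN hP
    (by rw [hNγ]; linear_combination P * e6) (by linear_combination N * e5)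
    (by linear_combination N * γ6 * e4) (by linear_combination N * γ6 * γ5 * e3)
    (by linear_combination N * γ6 * γ5 * γ4 * e2)
  have hα1 : α = Tval (ZMod 13) + γ2⁻¹ := by
    have hN0 : N ≠ 0 := by
      rw [hNγ]
      exact mul_ne_zero hP0 (hne hv7)
    have hM : N * γ6 * γ5 * γ4 * γ3 ≠ 0 :=
      mul_ne_zero (mul_ne_zero (mul_ne_zero (mul_ne_zero hN0 (hne hv6)) (hne hv5))
        (hne hv4)) (hne hv3)
    have h2 := hne hv2
    have : α * γ2 = Tval (ZMod 13) * γ2 + 1 :=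
      mul_left_cancel₀ hM (by linear_combination key)
    field_simp
    linear_combination this
  have hvβ : ∀ n, 1 ≤ n → val (β n) < 0 := fun n hn => val_neg_of_adeg_pos (hstep n hn).2.1
  have hX : pEval (Polynomial.X : Polynomial (ZMod 13)) = Tval (ZMod 13) := by simp [pEval]
  obtain ⟨ha1, hb2⟩ := cf_step_unique (f := a 1) (g := Polynomial.X) (hvβ 2 (by norm_num)) hv2
    (by rw [hX, ← hα1, ← (hstep 1 (by norm_num)).2.2, hβ1])
  obtain ⟨ha2, hb3⟩ := cf_step_unique (f := a 2) (g := Polynomial.C 12 * Polynomial.X)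
    (hvβ 3 (by norm_num)) hv3
    (by rw [pEval_C_mul_X, map_ofNat, ← hγ2, ← (hstep 2 (by norm_num)).2.2, hb2])
  obtain ⟨ha3, hb4⟩ := cf_step_unique (f := a 3) (g := Polynomial.C 7 * Polynomial.X)
    (hvβ 4 (by norm_num)) hv4
    (by rw [pEval_C_mul_X, map_ofNat, ← hγ3, ← (hstep 3 (by norm_num)).2.2, hb3])
  obtain ⟨ha4, hb5⟩ := cf_step_unique (f := a 4) (g := Polynomial.C 11 * Polynomial.X)
    (hvβ 5 (by norm_num)) hv5
    (by rw [pEval_C_mul_X, map_ofNat, ← hγ4, ← (hstep 4 (by norm_num)).2.2, hb4])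
  obtain ⟨ha5, hb6⟩ := cf_step_unique (f := a 5) (g := Polynomial.C 8 * Polynomial.X)
    (hvβ 6 (by norm_num)) hv6
    (by rw [pEval_C_mul_X, map_ofNat, ← hγ5, ← (hstep 5 (by norm_num)).2.2, hb5])
  obtain ⟨ha6, hb7⟩ := cf_step_unique (f := a 6) (g := Polynomial.C 5 * Polynomial.X)
    (hvβ 7 (by norm_num)) hv7
    (by rw [pEval_C_mul_X, map_ofNat, ← hγ6, ← (hstep 6 (by norm_num)).2.2, hb6])
  refine ⟨ha1, ha2, ha3, ha4, ha5, ha6, ?_⟩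
  rw [hb7, ← hP, ← hNγ, hN]
  ring
end
end

section
/- Let p ∈ {7, 13} and let α ∈ F(p) satisfy −α⁴/12 − Tα³ + α² + 1 = 0 with |α| > 1. Since α⁴ = −12(Tα³ − α² − 1), write α^n = a_n α³ + b_n α² + c_n α + d_n for n ≥ 4 with a_n, b_n, c_n, d_n ∈ F_p[T]. Then: (i) a_p b_{p+1} − a_{p+1} b_p = 0 in F_p[T]; (ii) setting δ = gcd(a_p, a_{p+1}), a_p* = a_p/δ, a_{p+1}* = a_{p+1}/δ, one has |α − a_{p+1}*/a_p*| < |a_p*|⁻², so that a_{p+1}*/a_p* is a convergent of α; explicitly a_{p+1}*/a_p* = [2T, 6T, 6T] if p = 7 and a_{p+1}*/a_p* = [T, 12T, 7T, 11T, 8T, 5T] if p = 13. -/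
/-!
Write `(a, b, c, d)` and `(a₁, b₁, c₁, d₁)` for the coefficients of `α^p` and `α^(p+1)` on the powers
`α³, α², α, 1`. For `p = 7` and `p = 13` they are computed explicitly (`quadSeq_seven` and the
lemmas after it), and one finds `a = D P`, `a₁ = D N`, `b = E P`, `b₁ = E N`, where `N / P` is the value of
the stated finite continued fraction. Hence `a b₁ = a₁ b`, and in `P α^(p+1) - N α^p` the terms in
`α³` and `α²` cancel, leaving `A α + B` with `A = P c₁ - N c` and `B = P d₁ - N d`. These turn out to
be very small (`5T, 3` for `p = 7` and `12T² + 12, 9T` for `p = 13`), so dividing by `P α^p` shows that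
`|α - N/P|` is less than `|P|⁻²` (`conv_bound`, `core`).
-/

noncomputable section
open Polynomial

/-- The quadruples `(a_n, b_n, c_n, d_n)` with `α^n = a_n α³ + b_n α² + c_n α + d_n`
for `n ≥ 4`, obtained iteratively from `α⁴ = −12(Tα³ − α² − 1)`:
`quadSeq p m` corresponds to `n = m + 4`. -/
def quadSeq (p : ℕ) [Fact p.Prime] :
    ℕ → Polynomial (ZMod p) × Polynomial (ZMod p) × Polynomial (ZMod p) × Polynomial (ZMod p)
  | 0 => (Polynomial.C (-12) * Polynomial.X, Polynomial.C 12, 0, Polynomial.C 12)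
  | m + 1 =>
      let q := quadSeq p m
      (Polynomial.C (-12) * Polynomial.X * q.1 + q.2.1,
       Polynomial.C 12 * q.1 + q.2.2.1,
       q.2.2.2,
       Polynomial.C 12 * q.1)

section

/-! ### Polynomials inside the Laurent series in `1/T` -/

variable {F : Type} [Field F]

theorem pEval_coe (f : Polynomial F) : pEval f = pEvalHom F f := rfl

theorem pEvalHom_X : pEvalHom F X = Tval F := by simp [pEvalHom]

theorem Tval_eq : Tval F = HahnSeries.single (-1 : ℤ) (1 : F) := by
  simp [Tval, HahnSeries.inv_single]

/-- The variable of the Laurent series is `1/T`, so the coefficient of `T ^ n` in a polynomial sits at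
exponent `-n`. -/
theorem pEval_coeff_neg (f : Polynomial F) (n : ℕ) :
    (pEval f).coeff (-(n : ℤ)) = f.coeff n := by
  induction f using Polynomial.induction_on' with
  | add f g hf hg =>
    rw [pEval_coe] at *
    rw [map_add, HahnSeries.coeff_add, Polynomial.coeff_add, hf, hg]
  | monomial k c =>
    rw [pEval, Polynomial.eval₂_monomial, Tval_eq, HahnSeries.single_pow, HahnSeries.C_mul_eq_smul,
      HahnSeries.coeff_smul, HahnSeries.coeff_single, Polynomial.coeff_monomial]
    simp [eq_comm]

theorem pEval_ne_zero {f : Polynomial F} (hf : f ≠ 0) : pEval f ≠ 0 := by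
  intro h
  apply hf
  ext n
  rw [← pEval_coeff_neg, h]
  simp

theorem le_orderTop_pEval (f : Polynomial F) :
    ((-(f.natDegree : ℤ) : ℤ) : WithTop ℤ) ≤ (pEval f).orderTop := by
  rw [pEval, Polynomial.eval₂_eq_sum_range, Tval_eq]
  refine Finset.sum_induction _ (fun x : LaurentSeries F =>
    ((-(f.natDegree : ℤ) : ℤ) : WithTop ℤ) ≤ x.orderTop)
    (fun x y hx hy => (le_min hx hy).trans HahnSeries.min_orderTop_le_orderTop_add)
    (by simp) ?_
  intro i hi
  rw [HahnSeries.single_pow, HahnSeries.C_mul_eq_smul]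
  refine le_trans ?_ (HahnSeries.orderTop_le_orderTop_smul _ _)
  refine le_trans ?_ HahnSeries.orderTop_single_le
  have := Finset.mem_range.1 hi
  rw [WithTop.coe_le_coe]
  simp
  omega

/-- With `le_orderTop_pEval`, this says that the order of `f(T)` is exactly `-deg f`. -/
theorem order_pEval_le {f : Polynomial F} (hf : f ≠ 0) :
    (pEval f).order ≤ -(f.natDegree : ℤ) := by
  apply HahnSeries.order_le_of_coeff_ne_zero
  rw [pEval_coeff_neg]
  simpa using hf

/-! ### The approximation argument -/

/-- If `P α^(p+1) - N α^p = A α + B`, then `P α^p (α - N/P) = α (A + B α⁻¹)`. Since `|α⁻¹| < 1`, the factor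
`A + B α⁻¹` has degree at most `e`; since `deg α ≥ 1`, dividing by `P α^(p-1)` makes `α - N/P`
of degree at most `e - (p - 1) - deg P`. -/
theorem conv_bound (α : LaurentSeries F) (hdeg : 0 < adeg α) {p : ℕ} (hp : 1 ≤ p)
    {N P A B : Polynomial F}
    (hP : P ≠ 0)
    (h : pEval P * α ^ (p + 1) - pEval N * α ^ p = pEval A * α + pEval B) {e : ℕ}
    (hA : A.natDegree ≤ e) (hB : B.natDegree ≤ e) (hx : α - pEval N / pEval P ≠ 0) :
    adeg (α - pEval N / pEval P) + P.natDegree + p ≤ e + 1 := by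
  have hα : α ≠ 0 := by
    rintro rfl
    simp [adeg] at hdeg
  have hP₁ := pEval_ne_zero hP
  have hord : α.order ≤ -1 := by unfold adeg at hdeg; omega
  set x := α - pEval N / pEval P with hxdef
  have key : pEval P * α ^ p * x = α * (pEval A + pEval B * α⁻¹) := by
    have h1 : α * (pEval A + pEval B * α⁻¹) = pEval A * α + pEval B := by field_simp
    have h2 : pEval P * (pEval N / pEval P) = pEval N := by field_simp
    rw [h1, ← h, hxdef]
    linear_combination (-α ^ p) * h2
  have hne : pEval A + pEval B * α⁻¹ ≠ 0 := by
    intro h0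
    rw [h0, mul_zero] at key
    exact mul_ne_zero (mul_ne_zero hP₁ (pow_ne_zero _ hα)) hx key
  have hlow : -(e : ℤ) ≤ (pEval A + pEval B * α⁻¹).order := by
    rw [← WithTop.coe_le_coe, HahnSeries.order_eq_orderTop_of_ne_zero hne]
    refine le_trans (le_min ?_ ?_) HahnSeries.min_orderTop_le_orderTop_add
    · refine le_trans ?_ (le_orderTop_pEval A)
      rw [WithTop.coe_le_coe]; omega
    · by_cases hB0 : pEval B = 0
      · simp [hB0]
      have hi : α.order + (α⁻¹).order = 0 := by
        rw [← HahnSeries.order_mul hα (inv_ne_zero hα), mul_inv_cancel₀ hα, HahnSeries.order_one]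
      have hb := le_orderTop_pEval B
      rw [← HahnSeries.order_eq_orderTop_of_ne_zero hB0, WithTop.coe_le_coe] at hb
      rw [← HahnSeries.order_eq_orderTop_of_ne_zero (mul_ne_zero hB0 (inv_ne_zero hα)),
        WithTop.coe_le_coe, HahnSeries.order_mul hB0 (inv_ne_zero hα)]
      omega
  have ho := congrArg HahnSeries.order key
  rw [HahnSeries.order_mul (mul_ne_zero hP₁ (pow_ne_zero _ hα)) hx,
    HahnSeries.order_mul hP₁ (pow_ne_zero _ hα), HahnSeries.order_pow,
    HahnSeries.order_mul hα hne] at ho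
  have hPo := order_pEval_le hP
  have h1p : (1 : ℤ) ≤ p := by exact_mod_cast hp
  rw [nsmul_eq_mul] at ho
  unfold adeg
  nlinarith

/-- The approximation, for abstract reductions of `α^p` and `α^(p+1)` whose two leading coefficients are
proportional to `(P, N)`: then `P α^(p+1) - N α^p` is linear in `α`, and `conv_bound` applies.
No coprimality of `N` and `P` is needed: `D` divides the gcd of `a = D P` and `a₁ = D N`, so the
reduced denominator has degree at most `deg P`. -/
theorem core [DecidableEq F] (α : LaurentSeries F) (hdeg : 0 < adeg α) {p : ℕ}
    {a b c d a₁ b₁ c₁ d₁ D E N P : Polynomial F}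
    (ha : a = D * P) (ha₁ : a₁ = D * N) (hb : b = E * P) (hb₁ : b₁ = E * N)
    (hD : D ≠ 0) (hP : P ≠ 0)
    (h : α ^ p = pEval a * α ^ 3 + pEval b * α ^ 2 + pEval c * α + pEval d)
    (h₁ : α ^ (p + 1) = pEval a₁ * α ^ 3 + pEval b₁ * α ^ 2 + pEval c₁ * α + pEval d₁)
    {e : ℕ} (hA : (P * c₁ - N * c).natDegree ≤ e) (hB : (P * d₁ - N * d).natDegree ≤ e)
    (hbd : P.natDegree + e + 1 < p) :
    (α - pEval (a₁ / EuclideanDomain.gcd a a₁) / pEval (a / EuclideanDomain.gcd a a₁) = 0 ∨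
      adeg (α - pEval (a₁ / EuclideanDomain.gcd a a₁) / pEval (a / EuclideanDomain.gcd a a₁))
        < -2 * ((a / EuclideanDomain.gcd a a₁).natDegree : ℤ)) ∧
    pEval (a₁ / EuclideanDomain.gcd a a₁) / pEval (a / EuclideanDomain.gcd a a₁)
      = pEval N / pEval P := by
  have ha0 : a ≠ 0 := ha ▸ mul_ne_zero hD hP
  have hDδ : D ∣ EuclideanDomain.gcd a a₁ :=
    EuclideanDomain.dvd_gcd ⟨P, ha⟩ ⟨N, ha₁⟩
  have hδ0 : EuclideanDomain.gcd a a₁ ≠ 0 := fun h0 =>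
    ha0 (EuclideanDomain.gcd_eq_zero_iff.1 h0).1
  have e1 := EuclideanDomain.mul_div_cancel' hδ0 (EuclideanDomain.gcd_dvd_left a a₁)
  have e2 := EuclideanDomain.mul_div_cancel' hδ0 (EuclideanDomain.gcd_dvd_right a a₁)
  set δ := EuclideanDomain.gcd a a₁
  have hap0 : a / δ ≠ 0 := by
    intro h0
    rw [h0, mul_zero] at e1
    exact ha0 e1.symm
  have hle : (a / δ).natDegree ≤ P.natDegree := by
    have h1 := Polynomial.natDegree_le_of_dvd hDδ hδ0
    have h2 := congrArg Polynomial.natDegree (e1.trans ha)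
    rw [Polynomial.natDegree_mul hδ0 hap0, Polynomial.natDegree_mul hD hP] at h2
    omega
  have hcross : (a₁ / δ) * P = N * (a / δ) := by
    apply mul_left_cancel₀ hδ0
    apply mul_left_cancel₀ hD
    linear_combination (D * P) * e2 - (D * N) * e1 + (D * P) * ha₁ - (D * N) * ha
  have hr : pEval (a₁ / δ) / pEval (a / δ) = pEval N / pEval P := by
    rw [div_eq_div_iff (pEval_ne_zero hap0) (pEval_ne_zero hP)]
    simpa only [pEval_coe, map_mul] using congrArg (pEvalHom F) hcross
  refine ⟨?_, hr⟩
  rw [hr]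
  by_cases hx : α - pEval N / pEval P = 0
  · exact Or.inl hx
  right
  have hlin : pEval P * α ^ (p + 1) - pEval N * α ^ p
      = pEval (P * c₁ - N * c) * α + pEval (P * d₁ - N * d) := by
    rw [h, h₁, ha, ha₁, hb, hb₁]
    simp only [pEval_coe, map_mul, map_sub]
    ring
  have := conv_bound α hdeg (by omega) hP hlin hA hB hx
  omega

theorem pow_eq (p : ℕ) [Fact p.Prime] (α : LaurentSeries (ZMod p))
    (h4 : α ^ 4 = -12 * Tval (ZMod p) * α ^ 3 + 12 * α ^ 2 + 12) (m : ℕ) :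
    α ^ (m + 4) = pEval (quadSeq p m).1 * α ^ 3 + pEval (quadSeq p m).2.1 * α ^ 2
            + pEval (quadSeq p m).2.2.1 * α + pEval (quadSeq p m).2.2.2 := by
  induction m with
  | zero =>
    simp only [quadSeq, pEval_coe, map_mul, map_neg, map_ofNat, map_zero, pEvalHom_X]
    linear_combination h4
  | succ m ih =>
    rw [show m + 1 + 4 = (m + 4) + 1 from rfl, pow_succ, ih]
    simp only [quadSeq, pEval_coe, map_mul, map_add, map_neg, map_ofNat, pEvalHom_X] at *
    linear_combination pEvalHom _ (quadSeq p m).1 * h4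

/-- Prepending the partial quotient `k` to a continued fraction with value `N/M` gives
`(k N + M)/N`. -/
theorem fcf_step {c d : LaurentSeries F} {t : List (LaurentSeries F)} {k K N M : Polynomial F}
    (h : fcf (d :: t) = pEval N / pEval M) (hc : c = pEval k) (hN : N ≠ 0)
    (hK : k * N + M = K) : fcf (c :: d :: t) = pEval K / pEval N := by
  have hN₁ := pEval_ne_zero hN
  rw [fcf, h, hc, ← hK, inv_div, eq_div_iff hN₁, add_mul, div_mul_cancel₀ _ hN₁]
  simp only [pEval_coe, map_mul, map_add]

theorem ne_zero_of_eval_one {p : ℕ} [Fact p.Prime] {f : Polynomial (ZMod p)} (n : ℕ)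
    (hn : ¬ p ∣ n) (h : f.eval 1 = n) : f ≠ 0 := by
  rintro rfl
  rw [eval_zero, eq_comm, ZMod.natCast_eq_zero_iff] at h
  exact hn h

theorem natCast_LS (p : ℕ) [Fact p.Prime] : ((p : ℕ) : LaurentSeries (ZMod p)) = 0 := by
  rw [← map_natCast (HahnSeries.C : ZMod p →+* LaurentSeries (ZMod p)), ZMod.natCast_self, map_zero]

theorem pow_four {K : Type} [Field K] {α T : K} (h12 : (12 : K) ≠ 0)
    (h : -α ^ 4 / 12 - T * α ^ 3 + α ^ 2 + 1 = 0) :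
    α ^ 4 = -12 * T * α ^ 3 + 12 * α ^ 2 + 12 := by
  field_simp at h
  linear_combination -h

/-! ### The explicit reductions and continued fractions -/

theorem quadSeq_seven [Fact (Nat.Prime 7)] : quadSeq 7 3 =
    (2 * X ^ 4 + 4 * X ^ 2 + 2, 5 * X ^ 3 + 5 * X, 6 * X ^ 2 + 4, 5 * X ^ 3 + 2 * X) := by
  simp only [quadSeq, map_neg, map_ofNat, Prod.mk.injEq]
  refine ⟨?_, ?_, ?_, ?_⟩ <;> grind

theorem quadSeq_succ_seven [Fact (Nat.Prime 7)] : quadSeq 7 4 =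
    (4 * X ^ 5 + 6 * X ^ 3 + 2 * X, 3 * X ^ 4 + 5 * X ^ 2, 5 * X ^ 3 + 2 * X,
      3 * X ^ 4 + 6 * X ^ 2 + 3) := by
  rw [quadSeq, quadSeq_seven]
  simp only [map_neg, map_ofNat, Prod.mk.injEq]
  refine ⟨?_, ?_, ?_, ?_⟩ <;> grind

theorem quadSeq_thirteen [Fact (Nat.Prime 13)] : quadSeq 13 9 =
    (X ^ 10 + 4 * X ^ 8 + 8 * X ^ 6 + 8 * X ^ 4 + 4 * X ^ 2,
      12 * X ^ 9 + 7 * X ^ 7 + 4 * X ^ 5 + 7 * X ^ 3 + 2 * X,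
      12 * X ^ 8 + 7 * X ^ 6 + 3 * X ^ 4 + 11 * X ^ 2 + 1,
      12 * X ^ 9 + 8 * X ^ 7 + 11 * X ^ 5 + 4 * X) := by
  simp only [quadSeq, map_neg, map_ofNat, Prod.mk.injEq]
  refine ⟨?_, ?_, ?_, ?_⟩ <;> grind

theorem quadSeq_succ_thirteen [Fact (Nat.Prime 13)] : quadSeq 13 10 =
    (X ^ 11 + 3 * X ^ 9 + 2 * X ^ 7 + 12 * X ^ 5 + 11 * X ^ 3 + 2 * X,
      12 * X ^ 10 + 8 * X ^ 8 + 12 * X ^ 6 + 8 * X ^ 4 + 7 * X ^ 2 + 1,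
      12 * X ^ 9 + 8 * X ^ 7 + 11 * X ^ 5 + 4 * X,
      12 * X ^ 10 + 9 * X ^ 8 + 5 * X ^ 6 + 5 * X ^ 4 + 9 * X ^ 2) := by
  rw [quadSeq, quadSeq_thirteen]
  simp only [map_neg, map_ofNat, Prod.mk.injEq]
  refine ⟨?_, ?_, ?_, ?_⟩ <;> grind

theorem fcf_seven [Fact (Nat.Prime 7)] :
    fcf [2 * Tval (ZMod 7), 6 * Tval (ZMod 7), 6 * Tval (ZMod 7)]
      = pEval (2 * X ^ 3 + X) / pEval (X ^ 2 + 1) := by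
  have hT : ∀ n : ℕ, (n : LaurentSeries (ZMod 7)) * Tval (ZMod 7) = pEval ((n : (ZMod 7)[X]) * X) :=
    fun n => by simp [pEval_coe, pEvalHom_X]
  refine fcf_step (k := 2 * X) (M := 6 * X) (fcf_step (k := 6 * X) (M := 1) ?_ ?_ ?_ ?_) ?_ ?_ ?_
  · exact (hT 6).trans (by simp [pEval_coe])
  · exact hT 6
  · exact ne_zero_of_eval_one 6 (by norm_num) (by norm_num)
  · grind
  · exact hT 2
  · exact ne_zero_of_eval_one 2 (by norm_num) (by norm_num)
  · grind

theorem fcf_thirteen [Fact (Nat.Prime 13)] :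
    fcf [Tval (ZMod 13), 12 * Tval (ZMod 13), 7 * Tval (ZMod 13), 11 * Tval (ZMod 13),
               8 * Tval (ZMod 13), 5 * Tval (ZMod 13)]
      = pEval (X ^ 6 + X ^ 4 + 11 * X ^ 2 + 1) / pEval (X ^ 5 + 2 * X ^ 3 + 2 * X) := by
  have hT : ∀ n : ℕ,
      (n : LaurentSeries (ZMod 13)) * Tval (ZMod 13) = pEval ((n : (ZMod 13)[X]) * X) :=
    fun n => by simp [pEval_coe, pEvalHom_X]
  have h5 : fcf [5 * Tval (ZMod 13)] = pEval (5 * X) / pEval 1 :=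
    (hT 5).trans (by simp [pEval_coe])
  have h4 := fcf_step (k := 8 * X) (K := X ^ 2 + 1) h5 (hT 8)
    (ne_zero_of_eval_one 5 (by norm_num) (by norm_num)) (by grind)
  have h3 := fcf_step (k := 11 * X) (K := 11 * X ^ 3 + 3 * X) h4 (hT 11)
    (ne_zero_of_eval_one 2 (by norm_num) (by norm_num)) (by grind)
  have h2 := fcf_step (k := 7 * X) (K := 12 * X ^ 4 + 9 * X ^ 2 + 1) h3 (hT 7)
    (ne_zero_of_eval_one 14 (by norm_num) (by norm_num)) (by grind)
  have h1 := fcf_step (k := 12 * X) (K := X ^ 5 + 2 * X ^ 3 + 2 * X) h2 (hT 12)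
    (ne_zero_of_eval_one 22 (by norm_num) (by norm_num)) (by grind)
  exact fcf_step (k := X) h1 (by simp [pEval_coe, pEvalHom_X])
    (ne_zero_of_eval_one 5 (by norm_num) (by norm_num)) (by grind)

end

/-- Let `p ∈ {7, 13}` and `α ∈ F(p)` with `|α| > 1` and
`−α⁴/12 − Tα³ + α² + 1 = 0`; write `α^n = a_n α³ + b_n α² + c_n α + d_n` for `n ≥ 4`.
Then (i) `a_p b_{p+1} − a_{p+1} b_p = 0`; (ii) with `δ = gcd(a_p, a_{p+1})`,
`a_p* = a_p/δ`, `a_{p+1}* = a_{p+1}/δ`, one has `|α − a_{p+1}*/a_p*| < |a_p*|⁻²`, so that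
`a_{p+1}*/a_p*` is a convergent of `α`; explicitly `a_{p+1}*/a_p* = [2T, 6T, 6T]` if
`p = 7` and `= [T, 12T, 7T, 11T, 8T, 5T]` if `p = 13`. -/
theorem stmt7 (p : ℕ) [Fact p.Prime] (hp : p = 7 ∨ p = 13)
    (α : LaurentSeries (ZMod p)) (hdeg : 0 < adeg α)
    (hα : -α ^ 4 / 12 - Tval (ZMod p) * α ^ 3 + α ^ 2 + 1 = 0) :
    (∀ n, 4 ≤ n →
      α ^ n = pEval (quadSeq p (n - 4)).1 * α ^ 3 + pEval (quadSeq p (n - 4)).2.1 * α ^ 2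
            + pEval (quadSeq p (n - 4)).2.2.1 * α + pEval (quadSeq p (n - 4)).2.2.2) ∧
    (quadSeq p (p - 4)).1 * (quadSeq p (p + 1 - 4)).2.1
      - (quadSeq p (p + 1 - 4)).1 * (quadSeq p (p - 4)).2.1 = 0 ∧
    (let δ := EuclideanDomain.gcd (quadSeq p (p - 4)).1 (quadSeq p (p + 1 - 4)).1
     let ap : Polynomial (ZMod p) := (quadSeq p (p - 4)).1 / δ
     let ap1 : Polynomial (ZMod p) := (quadSeq p (p + 1 - 4)).1 / δ
     (α - pEval ap1 / pEval ap = 0 ∨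
        adeg (α - pEval ap1 / pEval ap) < -2 * (ap.natDegree : ℤ)) ∧
     (p = 7 → pEval ap1 / pEval ap
        = fcf [2 * Tval (ZMod p), 6 * Tval (ZMod p), 6 * Tval (ZMod p)]) ∧
     (p = 13 → pEval ap1 / pEval ap
        = fcf [Tval (ZMod p), 12 * Tval (ZMod p), 7 * Tval (ZMod p), 11 * Tval (ZMod p),
               8 * Tval (ZMod p), 5 * Tval (ZMod p)])) := by
  have h12 : (12 : LaurentSeries (ZMod p)) ≠ 0 := by
    intro h0
    have hp0 := natCast_LS p
    -- `12` is invertible: `3 * 12 = 1` modulo `7` and `12 * 12 = 1` modulo `13`.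
    rcases hp with rfl | rfl <;> push_cast at hp0
    · exact one_ne_zero (α := LaurentSeries (ZMod 7)) (by linear_combination 3 * h0 - 5 * hp0)
    · exact one_ne_zero (α := LaurentSeries (ZMod 13)) (by linear_combination hp0 - h0)
  have hpow := pow_eq p α (pow_four h12 hα)
  refine ⟨fun n hn => ?_, ?_⟩
  · obtain ⟨m, rfl⟩ := Nat.exists_eq_add_of_le' hn
    exact hpow m
  rcases hp with rfl | rfl
  · have h7 := hpow 3
    have h8 := hpow 4
    simp only [Nat.reduceAdd, Nat.reduceSub, quadSeq_seven, quadSeq_succ_seven] at h7 h8 ⊢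
    refine ⟨by grind, ?_⟩
    have hP : (X ^ 2 + 1 : (ZMod 7)[X]).natDegree ≤ 2 := by compute_degree
    have key := core α hdeg (D := 2 * X ^ 2 + 2) (E := 5 * X) (N := 2 * X ^ 3 + X)
      (P := X ^ 2 + 1) (e := 1) (by grind) (by grind) (by grind) (by grind)
      (ne_zero_of_eval_one 4 (by norm_num) (by norm_num))
      (ne_zero_of_eval_one 2 (by norm_num) (by norm_num)) h7 h8
      (by
        rw [show ((X ^ 2 + 1) * (5 * X ^ 3 + 2 * X) - (2 * X ^ 3 + X) * (6 * X ^ 2 + 4) :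
          (ZMod 7)[X]) = 5 * X by grind]
        compute_degree)
      (by
        rw [show ((X ^ 2 + 1) * (3 * X ^ 4 + 6 * X ^ 2 + 3) -
          (2 * X ^ 3 + X) * (5 * X ^ 3 + 2 * X) : (ZMod 7)[X]) = 3 by grind]
        compute_degree!)
      (by omega)
    exact ⟨key.1, fun _ => key.2.trans fcf_seven.symm, by norm_num⟩
  · have h13 := hpow 9
    have h14 := hpow 10
    simp only [Nat.reduceAdd, Nat.reduceSub, quadSeq_thirteen, quadSeq_succ_thirteen] at h13 h14 ⊢
    refine ⟨by grind, ?_⟩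
    have hP : (X ^ 5 + 2 * X ^ 3 + 2 * X : (ZMod 13)[X]).natDegree ≤ 5 := by compute_degree
    have key := core α hdeg (D := X ^ 5 + 2 * X ^ 3 + 2 * X) (E := 12 * X ^ 4 + 9 * X ^ 2 + 1)
      (N := X ^ 6 + X ^ 4 + 11 * X ^ 2 + 1)
      (P := X ^ 5 + 2 * X ^ 3 + 2 * X) (e := 2) (by grind) (by grind) (by grind) (by grind)
      (ne_zero_of_eval_one 5 (by norm_num) (by norm_num))
      (ne_zero_of_eval_one 5 (by norm_num) (by norm_num)) h13 h14
      (by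
        rw [show ((X ^ 5 + 2 * X ^ 3 + 2 * X) * (12 * X ^ 9 + 8 * X ^ 7 + 11 * X ^ 5 + 4 * X) -
          (X ^ 6 + X ^ 4 + 11 * X ^ 2 + 1) *
            (12 * X ^ 8 + 7 * X ^ 6 + 3 * X ^ 4 + 11 * X ^ 2 + 1) :
          (ZMod 13)[X]) = 12 * X ^ 2 + 12 by grind]
        compute_degree)
      (by
        rw [show ((X ^ 5 + 2 * X ^ 3 + 2 * X) *
            (12 * X ^ 10 + 9 * X ^ 8 + 5 * X ^ 6 + 5 * X ^ 4 + 9 * X ^ 2) -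
          (X ^ 6 + X ^ 4 + 11 * X ^ 2 + 1) *
            (12 * X ^ 9 + 8 * X ^ 7 + 11 * X ^ 5 + 4 * X) : (ZMod 13)[X]) = 9 * X by grind]
        compute_degree!)
      (by omega)
    exact ⟨key.1, by norm_num, fun _ => key.2.trans fcf_thirteen.symm⟩
end
end

section
/- Let p be an odd prime, 1 ≤ k < p/2, a ∈ F_p*, and let v be a square root of −a (in F_p or in the quadratic extension F_{p²}). Then P_{k,a}(vT) = (−a)^k P_k(T) and Q_{k,a}(vT) = (−a)^{k−1} v Q_k(T). Moreover, if α = [a₁, …, a_l, α_{l+1}] ∈ F(p) satisfies α^p = ε₁ P_{k,a} α_{l+1} + ε₂ Q_{k,a} with ε₁, ε₂ ∈ F_p*, then β(T) = v·α(vT) has continued fraction expansion [b₁, b₂, …] with b_i(T) = v^{(−1)^{i+1}} a_i(vT) and complete quotient β_{l+1}(T) = v^{(−1)^l} α_{l+1}(vT), and β satisfies β^p = ε₁′ P_k β_{l+1} + ε₂′ Q_k, where ε₁′ = (−a)^{k + (p − (−1)^l)/2} ε₁ and ε₂′ = (−a)^{k + (p−1)/2} ε₂. -/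
/-!
For `v ≠ 0` the substitution `T ↦ vT` is a ring endomorphism `scaleT v` of the Laurent series field
that preserves degrees and extends the polynomial substitution `f ↦ f(vT)`. Hence applying it to
`α_n = a_n + 1 / α_{n+1}` and multiplying by `v ^ (±1)`, with alternating signs, produces the
continued fraction of `v α(vT)`: its complete quotients are `v ^ ((-1)^(n+1)) α_n(vT)`.

The formula for `P_{k,a}(vT)` is immediate from `v² = -a`, and that for `Q_{k,a}(vT)` is the change
of variables rule `polyInt_comp` for formal integration. Applying `scaleT v` to the equation for
`α ^ p` and multiplying by `v ^ p` then gives the equation for `v α(vT)`, since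
`v ^ (p - (-1)^l)` and `v ^ (p + 1)` are powers of `v² = -a`.
-/

noncomputable section
open Polynomial

/-! ### Formal integration -/

theorem polyInt_coeff_zero {F : Type} [Field F] (f : Polynomial F) : (polyInt f).coeff 0 = 0 := by
  simp [polyInt, Polynomial.finsetSum_coeff, Polynomial.coeff_X_pow]

theorem polyInt_coeff_succ {F : Type} [Field F] (f : Polynomial F) (n : ℕ) :
    (polyInt f).coeff (n + 1) = f.coeff n * ((n : F) + 1)⁻¹ := by
  simp only [polyInt, Polynomial.finsetSum_coeff, Polynomial.coeff_C_mul, Polynomial.coeff_X_pow,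
    mul_ite, mul_one, mul_zero, Nat.add_right_cancel_iff, Finset.sum_ite_eq, Finset.mem_range]
  split_ifs with h
  · rfl
  · rw [Polynomial.coeff_eq_zero_of_natDegree_lt (by omega), zero_mul]

theorem polyInt_map {F L : Type} [Field F] [Field L] (φ : F →+* L) (f : Polynomial F) :
    (polyInt f).map φ = polyInt (f.map φ) := by
  ext n
  cases n with
  | zero => simp [polyInt_coeff_zero]
  | succ n => simp [polyInt_coeff_succ]

theorem polyInt_C_mul {F : Type} [Field F] (c : F) (f : Polynomial F) :
    polyInt (Polynomial.C c * f) = Polynomial.C c * polyInt f := by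
  ext n
  cases n with
  | zero => simp [polyInt_coeff_zero]
  | succ n => simp [polyInt_coeff_succ, mul_assoc]

/-- Change of variables `x ↦ vx` in the formal integral from `0`. -/
theorem polyInt_comp {F : Type} [Field F] (v : F) (f : Polynomial F) :
    (polyInt f).comp (Polynomial.C v * Polynomial.X)
      = Polynomial.C v * polyInt (f.comp (Polynomial.C v * Polynomial.X)) := by
  ext n
  rw [Polynomial.comp_C_mul_X_coeff, Polynomial.coeff_C_mul]
  cases n with
  | zero => simp [polyInt_coeff_zero]
  | succ n =>
    rw [polyInt_coeff_succ, polyInt_coeff_succ, Polynomial.comp_C_mul_X_coeff]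
    ring

theorem Pka_map_comp {K F : Type} [Field K] [Field F] (φ : K →+* F) (k : ℕ) (a : K) (v : F)
    (hv : v ^ 2 = φ (-a)) :
    ((Pka k a).map φ).comp (Polynomial.C v * Polynomial.X)
      = Polynomial.C (φ ((-a) ^ k)) * Pk k := by
  have h : Polynomial.C (φ a) = -(Polynomial.C v : Polynomial F) ^ 2 := by
    rw [← Polynomial.C_pow, hv]; simp
  simp only [Pka, Pk, Polynomial.map_pow, Polynomial.map_add, Polynomial.map_X, Polynomial.map_C,
    Polynomial.pow_comp, Polynomial.add_comp, Polynomial.X_comp, Polynomial.C_comp, map_pow]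
  rw [← hv, ← mul_pow, h, Polynomial.C_pow]
  ring

theorem Qka_map_comp {K F : Type} [Field K] [Field F] (φ : K →+* F) (k : ℕ) (a : K) (v : F)
    (hv : v ^ 2 = φ (-a)) :
    ((Qka k a).map φ).comp (Polynomial.C v * Polynomial.X)
      = Polynomial.C (φ ((-a) ^ (k - 1)) * v) * Qk k := by
  rw [Qka, Qk, polyInt_map, polyInt_comp, Pka_map_comp φ _ a v hv, polyInt_C_mul, ← mul_assoc,
    ← Polynomial.C_mul, mul_comm v]

/-! ### The substitution `T ↦ vT` on Laurent series -/

theorem scaleT_support {F : Type} [Field F] {v : F} (hv : v ≠ 0) (α : LaurentSeries F) :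
    (scaleT v α).support = α.support := by
  ext n
  simp [scaleT, HahnSeries.mem_support, zpow_ne_zero, hv]

theorem scaleT_mul {F : Type} [Field F] {v : F} (hv : v ≠ 0) (α β : LaurentSeries F) :
    scaleT v (α * β) = scaleT v α * scaleT v β := by
  ext n
  change v ^ (-n) * (α * β).coeff n = _
  rw [HahnSeries.coeff_mul, HahnSeries.coeff_mul, Finset.mul_sum]
  refine Finset.sum_congr ?_ ?_
  · ext x
    simp [scaleT_support hv, -HahnSeries.mem_support]
  · intro x hx
    have h := (Finset.mem_antidiagonal.1 hx).2.2
    change _ = (v ^ (-x.1) * α.coeff x.1) * (v ^ (-x.2) * β.coeff x.2)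
    rw [← h, neg_add, zpow_add₀ hv]
    ring

theorem scaleT_C {F : Type} [Field F] (v c : F) :
    scaleT v (HahnSeries.C c) = HahnSeries.C c := by
  ext n
  change v ^ (-n) * (HahnSeries.C c : LaurentSeries F).coeff n = _
  rw [HahnSeries.C_apply]
  by_cases h : n = 0
  · subst h; simp
  · simp [HahnSeries.coeff_single_of_ne h]

/-- `scaleT v` as a ring endomorphism, for `v ≠ 0`. -/
def scaleHom {F : Type} [Field F] (v : F) (hv : v ≠ 0) : LaurentSeries F →+* LaurentSeries F where
  toFun := scaleT v
  map_one' := by simpa using scaleT_C v (1 : F)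
  map_mul' := scaleT_mul hv
  map_zero' := by ext n; simp [scaleT]
  map_add' x y := by ext n; simp [scaleT, mul_add]

theorem scaleT_Tval {F : Type} [Field F] (v : F) :
    scaleT v (Tval F) = HahnSeries.C v * Tval F := by
  have hT : Tval F = HahnSeries.single (-1 : ℤ) (1 : F) := by
    simp [Tval, HahnSeries.inv_single]
  rw [hT, HahnSeries.C_mul_eq_smul]
  ext n
  change v ^ (-n) * (HahnSeries.single (-1 : ℤ) (1 : F)).coeff n = _
  by_cases h : n = -1
  · subst h; simp
  · simp [HahnSeries.coeff_single_of_ne h]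

theorem pEval_eq_hom {F : Type} [Field F] (f : Polynomial F) : pEval f = pEvalHom F f := rfl

theorem scaleT_pEval {F : Type} [Field F] {v : F} (hv : v ≠ 0) (f : Polynomial F) :
    scaleT v (pEval f) = pEval (f.comp (Polynomial.C v * Polynomial.X)) := by
  have h : (scaleHom v hv).comp (pEvalHom F)
      = (pEvalHom F).comp (Polynomial.compRingHom (Polynomial.C v * Polynomial.X)) := by
    refine Polynomial.ringHom_ext (fun c => ?_) ?_
    · simpa [pEvalHom, scaleHom] using scaleT_C v c
    · simpa [pEvalHom, scaleHom] using scaleT_Tval v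
  exact congrArg (fun g : Polynomial F →+* LaurentSeries F => g f) h

theorem pEval_C_mul {F : Type} [Field F] (c : F) (f : Polynomial F) :
    pEval (Polynomial.C c * f) = HahnSeries.C c * pEval f := by
  rw [pEval_eq_hom, map_mul]
  simp [pEvalHom, pEval]

theorem scaleT_order {F : Type} [Field F] {v : F} (hv : v ≠ 0) (α : LaurentSeries F) :
    (scaleT v α).order = α.order := by
  have h := scaleT_support hv α
  by_cases h0 : α = 0
  · subst h0
    rw [show scaleT v (0 : LaurentSeries F) = 0 from (scaleHom v hv).map_zero]
  · have h1 : scaleT v α ≠ 0 := by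
      rwa [← HahnSeries.support_nonempty_iff, h, HahnSeries.support_nonempty_iff]
    simp only [HahnSeries.order_of_ne h0, HahnSeries.order_of_ne h1, h]

theorem adeg_C_mul_scaleT {F : Type} [Field F] {v c : F} (hv : v ≠ 0) (hc : c ≠ 0)
    (α : LaurentSeries F) : adeg (HahnSeries.C c * scaleT v α) = adeg α := by
  by_cases h0 : scaleT v α = 0
  · rw [h0, mul_zero, ← h0, adeg, adeg, scaleT_order hv]
  · rw [adeg, adeg, HahnSeries.order_mul (by simpa using hc) h0, HahnSeries.order_C, zero_add,
      scaleT_order hv]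

/-! ### Scaling a continued fraction -/

theorem degree_C_mul_comp {F : Type} [Field F] {v c : F} (hv : v ≠ 0) (hc : c ≠ 0)
    {f : Polynomial F} (hf : 0 < f.degree) :
    0 < (Polynomial.C c * f.comp (Polynomial.C v * Polynomial.X)).degree := by
  rw [Polynomial.degree_C_mul hc]
  rw [← Polynomial.natDegree_pos_iff_degree_pos] at hf ⊢
  rwa [Polynomial.natDegree_comp, Polynomial.natDegree_C_mul_X v hv, mul_one]

theorem neg_one_pow_succ_int (n : ℕ) : (-1 : ℤ) ^ (n + 1) = -(-1 : ℤ) ^ n := by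
  rw [pow_succ]; ring

/-- If `α = [a₁, a₂, …]`, then `v α(vT) = [v a₁(vT), v⁻¹ a₂(vT), v a₃(vT), …]`, the complete
quotients being scaled in the same way. -/
theorem IsCFOf_scale {F : Type} [Field F] {v : F} (hv : v ≠ 0) {α : LaurentSeries F}
    {a : ℕ → Polynomial F} {β : ℕ → LaurentSeries F} (h : IsCFOf α a β) :
    IsCFOf (HahnSeries.C v * scaleT v α)
      (fun i => Polynomial.C (v ^ ((-1 : ℤ) ^ (i + 1))) *
        (a i).comp (Polynomial.C v * Polynomial.X))
      (fun i => HahnSeries.C (v ^ ((-1 : ℤ) ^ (i + 1))) * scaleT v (β i)) := by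
  refine ⟨by simp [h.1], fun n hn => ?_⟩
  obtain ⟨h1, h2, h3⟩ := h.2 n hn
  have hc : v ^ ((-1 : ℤ) ^ (n + 1)) ≠ 0 := zpow_ne_zero _ hv
  refine ⟨degree_C_mul_comp hv hc h1, ?_, ?_⟩
  · rwa [adeg_C_mul_scaleT hv hc]
  · have h4 : scaleT v (β n) = scaleT v (pEval (a n)) + (scaleT v (β (n + 1)))⁻¹ := by
      conv_lhs => rw [h3]
      change scaleHom v hv _ = scaleHom v hv _ + (scaleHom v hv _)⁻¹
      rw [map_add, map_inv₀]
    change HahnSeries.C _ * scaleT v (β n) = _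
    rw [h4, mul_add, scaleT_pEval hv, pEval_C_mul, mul_inv, neg_one_pow_succ_int (n + 1),
      zpow_neg, map_inv₀, inv_inv]

/-- Let `p` be an odd prime, `1 ≤ k < p/2`, `a ∈ F_p*`, and `v` a square
root of `−a` (in `F_p` or a quadratic extension `F`). Then
`P_{k,a}(vT) = (−a)^k P_k(T)` and `Q_{k,a}(vT) = (−a)^{k−1} v Q_k(T)`; moreover if
`α = [a₁, …, a_l, α_{l+1}]` satisfies `α^p = ε₁ P_{k,a} α_{l+1} + ε₂ Q_{k,a}` with
`ε₁, ε₂ ∈ F_p*`, then `β(T) = v α(vT)` has continued fraction `[b₁, b₂, …]` with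
`b_i(T) = v^{(−1)^{i+1}} a_i(vT)`, complete quotient `β_{l+1}(T) = v^{(−1)^l} α_{l+1}(vT)`,
and `β^p = ε₁′ P_k β_{l+1} + ε₂′ Q_k`, where `ε₁′ = (−a)^{k+(p−(−1)^l)/2} ε₁` and
`ε₂′ = (−a)^{k+(p−1)/2} ε₂`. -/
theorem stmt8 (p : ℕ) [Fact p.Prime] (hodd : Odd p) (k : ℕ) (hk : 1 ≤ k) (hk2 : 2 * k < p)
    (a : ZMod p) (ha : a ≠ 0)
    (F : Type) [Field F] [Algebra (ZMod p) F] (v : F)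
    (hv : v ^ 2 = algebraMap (ZMod p) F (-a)) :
    ((Pka k a).map (algebraMap (ZMod p) F)).comp (Polynomial.C v * Polynomial.X)
        = Polynomial.C (algebraMap (ZMod p) F ((-a) ^ k)) * Pk k ∧
    ((Qka k a).map (algebraMap (ZMod p) F)).comp (Polynomial.C v * Polynomial.X)
        = Polynomial.C (algebraMap (ZMod p) F ((-a) ^ (k - 1)) * v) * Qk k ∧
    ∀ l : ℕ, 1 ≤ l → ∀ ε₁ ε₂ : ZMod p, ε₁ ≠ 0 → ε₂ ≠ 0 →
    ∀ (α : LaurentSeries F) (aa : ℕ → Polynomial (ZMod p)) (β : ℕ → LaurentSeries F),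
      IsCFOf α (fun n => (aa n).map (algebraMap (ZMod p) F)) β →
      α ^ p = HahnSeries.C (algebraMap (ZMod p) F ε₁)
                * pEval ((Pka k a).map (algebraMap (ZMod p) F)) * β (l + 1)
            + HahnSeries.C (algebraMap (ZMod p) F ε₂)
                * pEval ((Qka k a).map (algebraMap (ZMod p) F)) →
      ∃ βc : ℕ → LaurentSeries F,
        IsCFOf (HahnSeries.C v * scaleT v α)
          (fun i => Polynomial.C (v ^ ((-1 : ℤ) ^ (i + 1))) *
            ((aa i).map (algebraMap (ZMod p) F)).comp (Polynomial.C v * Polynomial.X)) βc ∧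
        βc (l + 1) = HahnSeries.C (v ^ ((-1 : ℤ) ^ l)) * scaleT v (β (l + 1)) ∧
        (HahnSeries.C v * scaleT v α) ^ p
          = HahnSeries.C (algebraMap (ZMod p) F
              ((-a) ^ (k + (if Even l then (p - 1) / 2 else (p + 1) / 2)) * ε₁))
              * pEval (Pk k) * βc (l + 1)
          + HahnSeries.C (algebraMap (ZMod p) F ((-a) ^ (k + (p - 1) / 2) * ε₂))
              * pEval (Qk k) := by
  have hv0 : v ≠ 0 := by
    rintro rfl
    rw [zero_pow two_ne_zero] at hv
    exact ha (by simpa using hv.symm)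
  refine ⟨Pka_map_comp _ k a v hv, Qka_map_comp _ k a v hv, ?_⟩
  intro l _ ε₁ ε₂ _ _ α aa β hcf hα
  refine ⟨_, IsCFOf_scale hv0 hcf, ?_, ?_⟩
  · simp [pow_succ]
  · have h1 : scaleT v α ^ p
        = HahnSeries.C (algebraMap (ZMod p) F ε₁)
            * (HahnSeries.C (algebraMap (ZMod p) F ((-a) ^ k)) * pEval (Pk k))
            * scaleT v (β (l + 1))
          + HahnSeries.C (algebraMap (ZMod p) F ε₂)
            * (HahnSeries.C (algebraMap (ZMod p) F ((-a) ^ (k - 1)) * v) * pEval (Qk k)) := by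
      have h2 : scaleT v α ^ p = scaleT v (α ^ p) := ((scaleHom v hv0).map_pow α p).symm
      rw [h2, hα, show ∀ x y, scaleT v (x + y) = scaleT v x + scaleT v y from
          (scaleHom v hv0).map_add,
        scaleT_mul hv0, scaleT_mul hv0, scaleT_mul hv0, scaleT_C, scaleT_C, scaleT_pEval hv0,
        scaleT_pEval hv0, Pka_map_comp _ k a v hv, Qka_map_comp _ k a v hv, pEval_C_mul,
        pEval_C_mul]
    obtain ⟨m, rfl⟩ := hodd
    obtain ⟨j, rfl⟩ := Nat.exists_eq_add_of_le' hk
    have e1 : (2 * m + 1 - 1) / 2 = m := by omega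
    have e2 : (2 * m + 1 + 1) / 2 = m + 1 := by omega
    -- The two scalar identities behind the values of the new coefficients.
    have hc1 : algebraMap (ZMod (2 * m + 1)) F
          ((-a) ^ (j + 1 + (if Even l then m else m + 1)) * ε₁) * v ^ ((-1 : ℤ) ^ (l + 1 + 1))
        = v ^ (2 * m + 1) * (algebraMap _ F ε₁ * algebraMap _ F ((-a) ^ (j + 1))) := by
      simp only [map_mul, map_pow, ← hv]
      rcases Nat.even_or_odd l with hl | hl
      · rw [if_pos hl, (hl.add_one.add_one).neg_one_pow, zpow_one]
        ring
      · rw [if_neg (Nat.not_even_iff_odd.2 hl), (hl.add_one.add_one).neg_one_pow, zpow_neg_one]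
        field_simp
        ring
    have hc2 : algebraMap (ZMod (2 * m + 1)) F ((-a) ^ (j + 1 + m) * ε₂)
        = v ^ (2 * m + 1) * (algebraMap _ F ε₂ * (algebraMap _ F ((-a) ^ j) * v)) := by
      simp only [map_mul, map_pow, ← hv]
      ring
    have hC1 := congrArg (HahnSeries.C : F →+* LaurentSeries F) hc1
    have hC2 := congrArg (HahnSeries.C : F →+* LaurentSeries F) hc2
    rw [map_mul HahnSeries.C] at hC1
    rw [mul_pow, h1, e1, e2, hC2, Nat.add_sub_cancel, ← map_pow]
    rw [mul_mul_mul_comm (HahnSeries.C _) (pEval _) (HahnSeries.C _) (scaleT _ _), hC1]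
    simp only [map_mul]
    ring
end
end
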